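/- For every real p > 1, the explored length e_p of the worst-case exit placement satisfies π_p < e_p ≤ 2π_p; that is, for p ∈ (1,2], π_p < π_p + 2∫_0^{s_p} (z^{p²−p}(1−z^p)^{1−p} + 1)^{1/p} dz ≤ 2π_p, and for p ∈ (2,∞), π_p < π_p + 2∫_{2^{−1/p}}^{s_p} (z^{p²−p}(1−z^p)^{1−p} + 1)^{1/p} dz ≤ 2π_p. -/

import Mathlib

open Real MeasureTheory intervalIntegral

/-- The ℓ_p norm of a point of ℝ². -/
noncomputable def lpN (p : ℝ) (z : ℝ × ℝ) : ℝ := (|z.1| ^ p + |z.2| ^ p) ^ (1 / p)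

/-- The normalization factor `N_p(φ) = (|sin φ|^p + |cos φ|^p)^{1/p}`. -/
noncomputable def Np (p φ : ℝ) : ℝ := (|Real.sin φ| ^ p + |Real.cos φ| ^ p) ^ (1 / p)

/-- The parameterization `ρ_p(φ) = (cos φ, sin φ)/N_p(φ)` of the ℓ_p unit circle. -/
noncomputable def rho (p φ : ℝ) : ℝ × ℝ := (Real.cos φ / Np p φ, Real.sin φ / Np p φ)

/-- The ℓ_p speed `‖ρ_p′(t)‖_p` of the parameterization `ρ_p`. -/
noncomputable def speed (p t : ℝ) : ℝ := lpN p (deriv (rho p) t)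

/-- `π_p`, half the ℓ_p-circumference of the ℓ_p unit circle. -/
noncomputable def piP (p : ℝ) : ℝ := 2 * ∫ t in (0 : ℝ)..(Real.pi / 2), speed p t

/-- The `p`-th power sum of the sine and cosine. -/
noncomputable def auxS (p φ : ℝ) : ℝ := |Real.sin φ| ^ p + |Real.cos φ| ^ p

lemma auxS_pos (p φ : ℝ) : 0 < auxS p φ := by
  unfold auxS
  by_cases h : Real.sin φ = 0
  · have hc : Real.cos φ ≠ 0 := by
      intro hc
      have := Real.sin_sq_add_cos_sq φ
      rw [h, hc] at this
      norm_num at this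
    have : 0 < |Real.cos φ| ^ p := Real.rpow_pos_of_pos (abs_pos.mpr hc) p
    have : 0 ≤ |Real.sin φ| ^ p := Real.rpow_nonneg (abs_nonneg _) p
    linarith
  · have : 0 < |Real.sin φ| ^ p := Real.rpow_pos_of_pos (abs_pos.mpr h) p
    have : 0 ≤ |Real.cos φ| ^ p := Real.rpow_nonneg (abs_nonneg _) p
    linarith

lemma Np_eq (p φ : ℝ) : Np p φ = auxS p φ ^ (1 / p) := rfl

lemma Np_pos (p φ : ℝ) : 0 < Np p φ := by
  rw [Np_eq]; exact Real.rpow_pos_of_pos (auxS_pos p φ) _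

lemma Np_contDiff (p : ℝ) (hp : 1 < p) : ContDiff ℝ 1 (Np p) := by
  have h : ContDiff ℝ 1 (fun x : ℝ => |x| ^ p) := by
    simpa only [Real.norm_eq_abs] using contDiff_norm_rpow (E := ℝ) hp
  have h1 : ContDiff ℝ 1 (auxS p) := by
    unfold auxS
    exact (h.comp Real.contDiff_sin).add (h.comp Real.contDiff_cos)
  exact h1.rpow_const_of_ne (fun x => (auxS_pos p x).ne')

lemma rhoX_contDiff (p : ℝ) (hp : 1 < p) :
    ContDiff ℝ 1 (fun φ => Real.cos φ / Np p φ) :=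
  Real.contDiff_cos.div (Np_contDiff p hp) (fun x => (Np_pos p x).ne')

lemma rhoY_contDiff (p : ℝ) (hp : 1 < p) :
    ContDiff ℝ 1 (fun φ => Real.sin φ / Np p φ) :=
  Real.contDiff_sin.div (Np_contDiff p hp) (fun x => (Np_pos p x).ne')

lemma deriv_rho (p : ℝ) (hp : 1 < p) (t : ℝ) :
    deriv (rho p) t = (deriv (fun φ => Real.cos φ / Np p φ) t,
      deriv (fun φ => Real.sin φ / Np p φ) t) := by
  have hx := ((rhoX_contDiff p hp).differentiable (by norm_num) t).hasDerivAt
  have hy := ((rhoY_contDiff p hp).differentiable (by norm_num) t).hasDerivAt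
  exact (hx.prodMk hy).deriv

lemma speed_continuous (p : ℝ) (hp : 1 < p) : Continuous (speed p) := by
  have hx := (rhoX_contDiff p hp).continuous_deriv (by norm_num)
  have hy := (rhoY_contDiff p hp).continuous_deriv (by norm_num)
  have : speed p = fun t => (|deriv (fun φ => Real.cos φ / Np p φ) t| ^ p +
      |deriv (fun φ => Real.sin φ / Np p φ) t| ^ p) ^ (1 / p) := by
    funext t
    simp only [speed, lpN, deriv_rho p hp]
  rw [this]
  have hp0 : (0:ℝ) ≤ p := by linarith
  have hp1 : (0:ℝ) ≤ 1 / p := by positivity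
  exact ((hx.abs.rpow_const (fun _ => Or.inr hp0)).add
    (hy.abs.rpow_const (fun _ => Or.inr hp0))).rpow_const (fun _ => Or.inr hp1)

lemma speed_nonneg (p t : ℝ) : 0 ≤ speed p t := by
  unfold speed lpN; positivity

lemma rho_pow (p : ℝ) (hp : 1 < p) (t : ℝ) (hs : 0 ≤ Real.sin t) (hc : 0 ≤ Real.cos t) :
    (Real.cos t / Np p t) ^ p + (Real.sin t / Np p t) ^ p = 1 := by
  have hN := Np_pos p t
  have hS := auxS_pos p t
  have : Np p t ^ p = auxS p t := by
    rw [Np_eq, ← Real.rpow_mul hS.le, one_div, inv_mul_cancel₀ (by linarith), Real.rpow_one]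
  rw [Real.div_rpow hc hN.le, Real.div_rpow hs hN.le, this, ← add_div, div_eq_one_iff_eq hS.ne']
  simp only [auxS, abs_of_nonneg hs, abs_of_nonneg hc]
  ring

/-- The integrand of the explored length. -/
noncomputable def auxG (p z : ℝ) : ℝ :=
  (z ^ (p ^ 2 - p) * (1 - z ^ p) ^ (1 - p) + 1) ^ (1 / p)

lemma speed_eq (p : ℝ) (hp : 1 < p) (t : ℝ) (ht : t ∈ Set.Ioo 0 (Real.pi / 2)) :
    auxG p (Real.sin t / Np p t) * |deriv (fun φ => Real.sin φ / Np p φ) t| = speed p t := by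
  have hpi := Real.pi_pos
  have hpos : ∀ u ∈ Set.Ioo 0 (Real.pi / 2), 0 < Real.sin u ∧ 0 < Real.cos u := fun u hu =>
    ⟨Real.sin_pos_of_pos_of_lt_pi hu.1 (by linarith [hu.2]),
     Real.cos_pos_of_mem_Ioo ⟨by linarith [hu.1], hu.2⟩⟩
  have hdx := ((rhoX_contDiff p hp).differentiable (by norm_num) t).hasDerivAt
  have hdy := ((rhoY_contDiff p hp).differentiable (by norm_num) t).hasDerivAt
  have hx : 0 < Real.cos t / Np p t := div_pos (hpos t ht).2 (Np_pos p t)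
  have hy : 0 < Real.sin t / Np p t := div_pos (hpos t ht).1 (Np_pos p t)
  have hxy := rho_pow p hp t (hpos t ht).1.le (hpos t ht).2.le
  have h1 := (hdx.rpow_const (p := p) (Or.inl hx.ne')).add
    (hdy.rpow_const (p := p) (Or.inl hy.ne'))
  have h2 : HasDerivAt (fun _ : ℝ => (1:ℝ)) _ t := h1.congr_of_eventuallyEq (by
    filter_upwards [isOpen_Ioo.mem_nhds ht] with u hu
    exact (rho_pow p hp u (hpos u hu).1.le (hpos u hu).2.le).symm)
  have h3 := h2.unique (hasDerivAt_const t (1:ℝ))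
  have hsp : speed p t = (|deriv (fun φ => Real.cos φ / Np p φ) t| ^ p +
      |deriv (fun φ => Real.sin φ / Np p φ) t| ^ p) ^ (1 / p) := by
    simp only [speed, lpN, deriv_rho p hp]
  rw [hsp]
  generalize deriv (fun φ => Real.cos φ / Np p φ) t = a at *
  generalize deriv (fun φ => Real.sin φ / Np p φ) t = b at *
  generalize Real.cos t / Np p t = x at *
  generalize Real.sin t / Np p t = y at *
  have hp0 : p ≠ 0 := by linarith
  have hX : 0 < x ^ (p - 1) := Real.rpow_pos_of_pos hx _
  have hY : 0 < y ^ (p - 1) := Real.rpow_pos_of_pos hy _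
  have h4 : x ^ (p-1) * a = - (y ^ (p-1) * b) := by
    have : p * (x ^ (p-1) * a + y ^ (p-1) * b) = 0 := by linarith
    rcases mul_eq_zero.mp this with h | h
    · exact absurd h hp0
    · linarith
  have h5 : x ^ (p-1) * |a| = y ^ (p-1) * |b| := by
    have := congrArg abs h4
    rwa [abs_neg, abs_mul, abs_mul, abs_of_pos hX, abs_of_pos hY] at this
  have h6 : |a| = y ^ (p-1) * |b| / x ^ (p-1) := by
    rw [← h5]; field_simp
  have h7 : |a| ^ p = y ^ (p ^ 2 - p) * (1 - y ^ p) ^ (1 - p) * |b| ^ p := by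
    have e1 : 1 - y ^ p = x ^ p := by linarith
    rw [h6, Real.div_rpow (by positivity) hX.le, Real.mul_rpow hY.le (abs_nonneg _),
      ← Real.rpow_mul hy.le, ← Real.rpow_mul hx.le, e1, ← Real.rpow_mul hx.le,
      show p * (1 - p) = -((p - 1) * p) by ring, Real.rpow_neg hx.le,
      show p ^ 2 - p = (p - 1) * p by ring]
    field_simp
  have h8 : 0 ≤ y ^ (p ^ 2 - p) * (1 - y ^ p) ^ (1 - p) := by
    have e1 : 1 - y ^ p = x ^ p := by linarith
    rw [e1]; positivity
  rw [h7, show y ^ (p ^ 2 - p) * (1 - y ^ p) ^ (1 - p) * |b| ^ p + |b| ^ p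
    = (y ^ (p ^ 2 - p) * (1 - y ^ p) ^ (1 - p) + 1) * |b| ^ p by ring,
    Real.mul_rpow (by linarith) (by positivity), ← Real.rpow_mul (abs_nonneg b),
    mul_one_div_cancel hp0, Real.rpow_one]
  rfl

lemma auxG_pos (p : ℝ) (hp : 1 < p) (z : ℝ) (h0 : 0 ≤ z) (h1 : z < 1) : 0 < auxG p z := by
  have : z ^ p < 1 := Real.rpow_lt_one h0 h1 (by linarith)
  have : 0 ≤ 1 - z ^ p := by linarith
  unfold auxG; positivity

lemma auxG_contAt (p : ℝ) (hp : 1 < p) (z : ℝ) (h0 : 0 ≤ z) (h1 : z < 1) :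
    ContinuousAt (auxG p) z := by
  have hz : z ^ p < 1 := Real.rpow_lt_one h0 h1 (by linarith)
  unfold auxG
  have hp1 : (0:ℝ) < 1 / p := by positivity
  refine ContinuousAt.rpow_const ?_ (Or.inr hp1.le)
  refine ContinuousAt.add (ContinuousAt.mul ?_ ?_) continuousAt_const
  · exact continuousAt_id.rpow_const (Or.inr (by nlinarith))
  · refine ContinuousAt.rpow_const ?_ (Or.inl (by linarith))
    exact continuousAt_const.sub (continuousAt_id.rpow_const (Or.inr (by linarith)))

lemma main_bound (p : ℝ) (hp : 1 < p) (s : ℝ) (h0 : 0 < s) (h1 : s < 1) :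
    ∫ z in (0:ℝ)..s, auxG p z ≤ ∫ t in (0:ℝ)..(Real.pi / 2), speed p t := by
  have hpi := Real.pi_pos
  have hp0 : p ≠ 0 := by linarith
  set y : ℝ → ℝ := fun φ => Real.sin φ / Np p φ with hydef
  have hyC : ContDiff ℝ 1 y := rhoY_contDiff p hp
  have hy0 : y 0 = 0 := by simp [hydef]
  have hy1 : y (Real.pi / 2) = 1 := by
    simp [hydef, Np, Real.zero_rpow hp0]
  obtain ⟨b, hb, hyb⟩ : s ∈ y '' Set.Icc 0 (Real.pi / 2) :=
    intermediate_value_Icc (by linarith) hyC.continuous.continuousOn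
      ⟨by rw [hy0]; exact h0.le, by rw [hy1]; exact h1.le⟩
  have hb2 : b < Real.pi / 2 := by
    rcases hb.2.lt_or_eq with h | h
    · exact h
    · rw [h, hy1] at hyb; linarith
  have hrange : ∀ t ∈ Set.Icc 0 b, 0 ≤ y t ∧ y t < 1 := by
    intro t ht
    have hs : 0 ≤ Real.sin t := Real.sin_nonneg_of_nonneg_of_le_pi ht.1 (by linarith [ht.2])
    have hc : 0 < Real.cos t :=
      Real.cos_pos_of_mem_Ioo ⟨by linarith [ht.1], by linarith [ht.2]⟩
    have hy : 0 ≤ y t := div_nonneg hs (Np_pos p t).le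
    refine ⟨hy, ?_⟩
    have hx : 0 < (Real.cos t / Np p t) ^ p :=
      Real.rpow_pos_of_pos (div_pos hc (Np_pos p t)) p
    have hxy := rho_pow p hp t hs hc.le
    by_contra hcon
    have : 1 ≤ y t ^ p := Real.one_le_rpow (not_lt.mp hcon) (by linarith)
    have : y t ^ p = (Real.sin t / Np p t) ^ p := rfl
    linarith
  have hd : Continuous (deriv y) := hyC.continuous_deriv (by norm_num)
  have hgc : ContinuousOn (auxG p) (y '' Set.uIcc 0 b) := by
    rintro _ ⟨t, ht, rfl⟩
    rw [Set.uIcc_of_le hb.1] at ht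
    exact (auxG_contAt p hp _ (hrange t ht).1 (hrange t ht).2).continuousWithinAt
  have hcv := intervalIntegral.integral_comp_mul_deriv' (a := 0) (b := b) (f := y)
    (f' := deriv y) (g := auxG p)
    (fun t _ => (hyC.differentiable (by norm_num) t).hasDerivAt) hd.continuousOn hgc
  rw [hy0, hyb] at hcv
  rw [← hcv]
  have hsi : ∀ u v, IntervalIntegrable (speed p) volume u v :=
    fun u v => (speed_continuous p hp).intervalIntegrable u v
  calc ∫ t in (0:ℝ)..b, (auxG p ∘ y) t * deriv y t
      ≤ ∫ t in (0:ℝ)..b, speed p t := by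
        refine intervalIntegral.integral_mono_on_of_le_Ioo hb.1 ?_ (hsi _ _) ?_
        · refine ContinuousOn.intervalIntegrable ?_
          exact (hgc.comp hyC.continuous.continuousOn (Set.mapsTo_image _ _)).mul
            hd.continuousOn
        · intro t ht
          rw [← speed_eq p hp t ⟨ht.1, ht.2.trans hb2⟩]
          have := hrange t ⟨ht.1.le, ht.2.le⟩
          exact mul_le_mul_of_nonneg_left (le_abs_self _) (auxG_pos p hp _ this.1 this.2).le
    _ ≤ ∫ t in (0:ℝ)..(Real.pi / 2), speed p t := by
        rw [← intervalIntegral.integral_add_adjacent_intervals (hsi 0 b) (hsi b (Real.pi / 2))]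
        have := intervalIntegral.integral_nonneg (μ := volume) hb.2
          (fun t _ => speed_nonneg p t)
        linarith

lemma main_both (p : ℝ) (hp : 1 < p) (a s : ℝ) (ha : 0 ≤ a) (has : a < s) (h1 : s < 1) :
    0 < (∫ z in a..s, auxG p z) ∧
    ∫ z in a..s, auxG p z ≤ ∫ t in (0:ℝ)..(Real.pi / 2), speed p t := by
  have hint : ∀ u v, 0 ≤ u → u ≤ v → v ≤ s → IntervalIntegrable (auxG p) volume u v := by
    intro u v hu huv hv
    refine ContinuousOn.intervalIntegrable ?_
    rw [Set.uIcc_of_le huv]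
    exact fun z hz => (auxG_contAt p hp z (hu.trans hz.1)
      ((hz.2.trans hv).trans_lt h1)).continuousWithinAt
  constructor
  · refine intervalIntegral.intervalIntegral_pos_of_pos_on (hint a s ha has.le le_rfl) ?_ has
    exact fun z hz => auxG_pos p hp z (ha.trans hz.1.le) (hz.2.trans h1)
  · refine le_trans ?_ (main_bound p hp s (ha.trans_lt has) h1)
    rw [← intervalIntegral.integral_add_adjacent_intervals (hint 0 a le_rfl ha has.le)
      (hint a s ha has.le le_rfl)]
    have := intervalIntegral.integral_nonneg (μ := volume) ha
      (fun z (hz : z ∈ Set.Icc 0 a) => (auxG_pos p hp z hz.1 (hz.2.trans_lt (has.trans h1))).le)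
    linarith

/-- For every `p > 1`, the explored length `e_p` of the worst-case exit placement
satisfies `π_p < e_p ≤ 2π_p`, where `e_p` is defined piecewise for `p ∈ (1,2]` and
for `p ∈ (2,∞)` (the latter via the root `w_p ∈ (0,1)` of `w^p + 1 = 2(1−w)^p`). -/
theorem stmt_19 (p : ℝ) (hp : 1 < p) :
    (p ≤ 2 →
      let sp : ℝ := (((2 : ℝ) ^ p - 1) ^ (1 / (p - 1)) + 1) ^ (-(1 / p))
      let ep : ℝ := piP p
        + 2 * ∫ z in (0 : ℝ)..sp, (z ^ (p ^ 2 - p) * (1 - z ^ p) ^ (1 - p) + 1) ^ (1 / p)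
      piP p < ep ∧ ep ≤ 2 * piP p) ∧
    (2 < p → ∀ w ∈ Set.Ioo (0 : ℝ) 1, w ^ p + 1 = 2 * (1 - w) ^ p →
      let sp : ℝ := (w ^ (p / (p - 1)) + 1) ^ (-(1 / p))
      let ep : ℝ := piP p
        + 2 * ∫ z in ((2 : ℝ) ^ (-(1 / p)))..sp,
            (z ^ (p ^ 2 - p) * (1 - z ^ p) ^ (1 - p) + 1) ^ (1 / p)
      piP p < ep ∧ ep ≤ 2 * piP p) := by
  have hp1 : -(1 / p) < 0 := by
    have : 0 < 1 / p := by positivity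
    linarith
  constructor
  · intro _ sp ep
    have hA : (0:ℝ) < ((2 : ℝ) ^ p - 1) ^ (1 / (p - 1)) := by
      have : (1:ℝ) < 2 ^ p := Real.one_lt_rpow (by norm_num) (by linarith)
      exact Real.rpow_pos_of_pos (by linarith) _
    have h0 : 0 < sp := Real.rpow_pos_of_pos (by linarith) _
    have h1 : sp < 1 := Real.rpow_lt_one_of_one_lt_of_neg (by linarith) hp1
    obtain ⟨hlo, hhi⟩ := main_both p hp 0 sp le_rfl h0 h1
    have he : ep = piP p + 2 * ∫ z in (0 : ℝ)..sp, auxG p z := rfl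
    have hpi : piP p = 2 * ∫ t in (0 : ℝ)..(Real.pi / 2), speed p t := rfl
    constructor <;> linarith
  · intro _ w hw _ sp ep
    have hA : (0:ℝ) < w ^ (p / (p - 1)) := Real.rpow_pos_of_pos hw.1 _
    have hB : w ^ (p / (p - 1)) < 1 :=
      Real.rpow_lt_one hw.1.le hw.2 (div_pos (by linarith) (by linarith))
    have h1 : sp < 1 := Real.rpow_lt_one_of_one_lt_of_neg (by linarith) hp1
    have h0 : (2 : ℝ) ^ (-(1 / p)) < sp :=
      Real.rpow_lt_rpow_of_neg (by linarith) (by linarith) hp1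
    obtain ⟨hlo, hhi⟩ := main_both p hp ((2 : ℝ) ^ (-(1 / p))) sp (by positivity) h0 h1
    have he : ep = piP p + 2 * ∫ z in ((2 : ℝ) ^ (-(1 / p)))..sp, auxG p z := rfl
    have hpi : piP p = 2 * ∫ t in (0 : ℝ)..(Real.pi / 2), speed p t := rfl
    constructor <;> linarith
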